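/- arXiv:0907.0729 — 6 statements merged into one kernel-verified Lean document; each statement's English description precedes it below -/
import Mathlib

section
/- Let G, H and K be arbitrary groups. Then there exists an injective group homomorphism (G ≀ H) ≀ K →* G ≀ (H ≀ K); in particular (G ≀ H) ≀ K is isomorphic to a subgroup of G ≀ (H ≀ K). Concretely, the map Φ(φ, x) = (α_φ, (φ₂, x)) is such an embedding, where for φ : K → G ≀ H we write φ(k) = (φ₁(k), φ₂(k)) with φ₁(k) : H → G and φ₂(k) ∈ H, and α_φ : H ≀ K → G is defined by α_φ(h̃, k) = φ₁(k)(h̃(k)). -/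
/-!
The evaluation `(f, k) ↦ f k` from `H ≀ K` to `H` is a cocycle for left translation: multiplying
`(f, k)` by `(φ₂, x)⁻¹` multiplies `f k` by `(φ₂ k)⁻¹`, which is how `φ₂ k ∈ H` translates the
argument of a function `H → G`. Hence `Φ` is multiplicative. As `(f, k) ↦ (f k, k)` is onto `H × K`,
the function `α_φ` determines every value `φ₁ k a`, so `Φ` is injective.
-/

/-- The action of `H` on the group of functions `H → G`, given by
`(h • f) k = f (h⁻¹ * k)`. -/
def wreathMulAut (G H : Type*) [Group G] [Group H] : H →* MulAut (H → G) where
  toFun h :=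
    { toFun := fun f k => f (h⁻¹ * k)
      invFun := fun f k => f (h * k)
      left_inv := fun f => by funext k; simp [← mul_assoc]
      right_inv := fun f => by funext k; simp [← mul_assoc]
      map_mul' := fun f g => rfl }
  map_one' := by
    ext f k
    simp
  map_mul' := fun a b => by
    ext f k
    simp [mul_assoc]

/-- The (regular) wreath product `G ≀ H`, i.e. the semidirect product
`(H → G) ⋊ H` where `H` acts on `H → G` by `(h • f) k = f (h⁻¹ * k)`, with
multiplication `(f, h) * (f', h') = (f * (h • f'), h * h')`. -/
abbrev Wreath (G H : Type*) [Group G] [Group H] :=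
  (H → G) ⋊[wreathMulAut G H] H

theorem wreathMulAut_symm_apply {G H : Type*} [Group G] [Group H] (h : H) (f : H → G) (k : H) :
    (wreathMulAut G H h).symm f k = f (h * k) := rfl

namespace Wreath

variable {α D G H K : Type*} [Group D] [Group G] [Group H] [Group K]

theorem mul_left_apply (v w : Wreath G H) (k : H) :
    (v * w).left k = v.left k * w.left (v.right⁻¹ * k) := rfl

/-- Functoriality of the wreath product in its base group: the homomorphism `D ≀ K →* H ≀ K` that
applies `f : D →* H` to every value of the left component. -/
def mapLeft (f : D →* H) : Wreath D K →* Wreath H K :=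
  SemidirectProduct.map (f.compLeft K) (MonoidHom.id K) fun _ => rfl

theorem mapLeft_left_apply (f : D →* H) (w : Wreath D K) (k : K) :
    (mapLeft f w).left k = f (w.left k) := rfl

theorem mapLeft_right (f : D →* H) (w : Wreath D K) : (mapLeft f w).right = w.right := rfl

/-- The value `f k` of an element `(f, k)` of `H ≀ K`, the point of `H` at which `α_φ (f, k)`
evaluates `φ₁ k`. -/
def eval (p : Wreath H K) : H := p.left p.right

theorem eval_inv_mul (w p : Wreath H K) : eval (w⁻¹ * p) = (w.left p.right)⁻¹ * eval p := by
  simp [eval, wreathMulAut_symm_apply]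

theorem right_eval_surjective :
    Function.Surjective fun p : Wreath H K => (p.right, eval p) :=
  fun ⟨k, a⟩ => ⟨⟨fun _ => a, k⟩, rfl⟩

/-- The function `α_φ` on `H ≀ K`, as a function of the first components `φ₁` of `φ`. -/
def uncurryEval (φ₁ : K → H → α) (p : Wreath H K) : α := φ₁ p.right (eval p)

theorem uncurryEval_injective :
    Function.Injective (uncurryEval : (K → H → α) → Wreath H K → α) :=
  right_eval_surjective.injective_comp_right.comp Function.uncurry_injective

theorem uncurryEval_mul (v w : Wreath (Wreath G H) K) (p : Wreath H K) :
    uncurryEval (fun k => ((v * w).left k).left) p =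
      uncurryEval (fun k => (v.left k).left) p *
        uncurryEval (fun k => (w.left k).left)
          ((mapLeft SemidirectProduct.rightHom v)⁻¹ * p) := by
  simp only [uncurryEval, mul_left_apply, eval_inv_mul, mapLeft_left_apply, mapLeft_right,
    SemidirectProduct.mul_right, SemidirectProduct.inv_right, SemidirectProduct.rightHom_eq_right]

/-- The embedding `Φ (φ, x) = (α_φ, (φ₂, x))`; its right component `(φ₂, x)` is encoded as the image
of `(φ, x)` under the map induced by the projection `G ≀ H →* H`. -/
def assocHom : Wreath (Wreath G H) K →* Wreath G (Wreath H K) :=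
  MonoidHom.mk'
    (fun w => ⟨uncurryEval fun k => (w.left k).left, mapLeft SemidirectProduct.rightHom w⟩)
    fun v w => SemidirectProduct.ext (funext (uncurryEval_mul v w)) (map_mul _ v w)

theorem assocHom_injective :
    Function.Injective (assocHom : Wreath (Wreath G H) K →* Wreath G (Wreath H K)) := by
  intro v w h
  have h_left : (fun k => (v.left k).left) = fun k => (w.left k).left :=
    uncurryEval_injective (congrArg SemidirectProduct.left h)
  have h_right : mapLeft SemidirectProduct.rightHom v = mapLeft SemidirectProduct.rightHom w :=
    congrArg SemidirectProduct.right h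
  obtain ⟨h_right_left, h_right_right⟩ := SemidirectProduct.ext_iff.mp h_right
  exact SemidirectProduct.ext
    (funext fun k => SemidirectProduct.ext (congrFun h_left k) (congrFun h_right_left k))
    h_right_right

end Wreath

/-- For arbitrary groups `G`, `H`, `K`, there is an injective group
homomorphism `(G ≀ H) ≀ K →* G ≀ (H ≀ K)`; concretely, the map
`Φ (φ, x) = (α_φ, (φ₂, x))`, where `φ k = (φ₁ k, φ₂ k)` and
`α_φ (h̃, k) = φ₁ k (h̃ k)`, is such an embedding.  In particular
`(G ≀ H) ≀ K` is isomorphic to a subgroup of `G ≀ (H ≀ K)`. -/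
theorem wreath_wreath_embeds
    (G H K : Type*) [Group G] [Group H] [Group K] :
    ∃ Φ : Wreath (Wreath G H) K →* Wreath G (Wreath H K),
      Function.Injective Φ ∧
        ∀ (φ : K → Wreath G H) (x : K),
          Φ ⟨φ, x⟩ =
            ⟨fun p : Wreath H K => (φ p.right).left (p.left p.right),
              ⟨fun k => (φ k).right, x⟩⟩ :=
  ⟨Wreath.assocHom, Wreath.assocHom_injective, fun _ _ => rfl⟩
end

section
/- Let G₁ and G₂ be groups and let π : G₁ ∗ G₂ → G₁ × G₂ be the canonical surjective group homomorphism from the free product to the direct product (the homomorphism restricting to the inclusion G_i ↪ G₁ × G₂ on each free factor). Then the kernel of π is a free group. -/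
open Monoid
open scoped Monoid.Coprod

/-!
Write `K` for the kernel. It is the subgroup `⁅G₁, G₂⁆` of `G₁ ∗ G₂`: that commutator is normal,
since each factor normalizes it, and the factors commute modulo it. Hence `K` is generated by the
commutators `⁅p, q⁆` with `p ≠ 1` and `q ≠ 1`, and it remains to find, for every function `c` from
such pairs to a group `H`, a homomorphism `K →* H` taking `⁅p, q⁆` to `c (p, q)`.

Write `Q = G₁ × G₂`. The two factors of `Q` embed in the wreath product `H ≀ᵣ Q`; conjugating the
second embedding by a function `Q → H` destroys their commutation and gives a homomorphism
`G₁ ∗ G₂ →* H ≀ᵣ Q` over `Q`. It maps `K` into the base group `Q → H`, and evaluating at `1 : Q`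
is the required homomorphism if the conjugating function is built from `c`, extended by `1` to the
pairs with `p = 1` or `q = 1`.
-/

theorem commutator_normal_of_sup_eq_top {G : Type*} [Group G] {A B : Subgroup G}
    (h : A ⊔ B = ⊤) : ⁅A, B⁆.Normal :=
  Subgroup.normalizer_eq_top_iff.mp <| top_le_iff.mp <| h.symm.trans_le <|
    sup_le (Subgroup.normalizer_commutator_ge_left A B)
      (Subgroup.normalizer_commutator_ge_right A B)

/-- The cartesian subgroup of the free product `G₁ ∗ G₂`: the kernel of the canonical map to the
direct product. -/
abbrev cartesianSubgroup (G₁ G₂ : Type*) [Group G₁] [Group G₂] : Subgroup (G₁ ∗ G₂) :=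
  (Coprod.toProd : G₁ ∗ G₂ →* G₁ × G₂).ker

namespace cartesianSubgroup

open scoped commutatorElement

variable {G₁ G₂ H : Type*} [Group G₁] [Group G₂] [Group H]

theorem commutator_inl_inr_mem (p : G₁) (q : G₂) :
    ⁅(Coprod.inl p : G₁ ∗ G₂), Coprod.inr q⁆ ∈ cartesianSubgroup G₁ G₂ := by
  rw [MonoidHom.mem_ker, map_commutatorElement]
  simp [commutatorElement_def]

theorem eq_commutator_range_inl_range_inr :
    cartesianSubgroup G₁ G₂ =
      ⁅(Coprod.inl : G₁ →* G₁ ∗ G₂).range, (Coprod.inr : G₂ →* G₁ ∗ G₂).range⁆ := by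
  set N := ⁅(Coprod.inl : G₁ →* G₁ ∗ G₂).range, (Coprod.inr : G₂ →* G₁ ∗ G₂).range⁆
  have hN : N.Normal := commutator_normal_of_sup_eq_top Coprod.range_inl_sup_range_inr
  apply le_antisymm
  · let π := QuotientGroup.mk' N
    have commute_mod (p : G₁) (q : G₂) : Commute (π.comp Coprod.inl p) (π.comp Coprod.inr q) := by
      rw [← commutatorElement_eq_one_iff_commute, MonoidHom.comp_apply, MonoidHom.comp_apply,
        ← map_commutatorElement]
      exact (QuotientGroup.eq_one_iff _).mpr
        (Subgroup.commutator_mem_commutator ⟨p, rfl⟩ ⟨q, rfl⟩)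
    have factorization :
        (MonoidHom.noncommCoprod _ _ commute_mod).comp Coprod.toProd = π := by
      ext <;> simp
    calc cartesianSubgroup G₁ G₂
      _ ≤ π.ker := by
        rw [← factorization, ← MonoidHom.comap_ker]
        exact MonoidHom.ker_le_comap _ _
      _ = N := QuotientGroup.ker_mk' N
  · rw [Subgroup.commutator_le]
    rintro _ ⟨p, rfl⟩ _ ⟨q, rfl⟩
    exact commutator_inl_inr_mem p q

/-- The commutator of an element of `G₁` and an element of `G₂`, as an element of the cartesian
subgroup. Those with both entries nontrivial form the free basis. -/
def crossCommutator (x : G₁ × G₂) : cartesianSubgroup G₁ G₂ :=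
  ⟨⁅Coprod.inl x.1, Coprod.inr x.2⁆, commutator_inl_inr_mem x.1 x.2⟩

theorem crossCommutator_eq_one {x : G₁ × G₂} (h : x.1 = 1 ∨ x.2 = 1) : crossCommutator x = 1 := by
  rcases h with h | h <;> simp [crossCommutator, h]

theorem hom_ext {f g : cartesianSubgroup G₁ G₂ →* H}
    (h : ∀ x : G₁ × G₂, x.1 ≠ 1 ∧ x.2 ≠ 1 → f (crossCommutator x) = g (crossCommutator x)) :
    f = g := by
  have agree (x : G₁ × G₂) : f (crossCommutator x) = g (crossCommutator x) := by
    by_cases hx : x.1 = 1 ∨ x.2 = 1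
    · simp only [crossCommutator_eq_one hx, map_one]
    · exact h x (not_or.mp hx)
  have le_eqLocus :
      cartesianSubgroup G₁ G₂ ≤ (f.eqLocus g).map (cartesianSubgroup G₁ G₂).subtype := by
    conv_lhs => rw [eq_commutator_range_inl_range_inr]
    rw [Subgroup.commutator_le]
    rintro _ ⟨p, rfl⟩ _ ⟨q, rfl⟩
    exact ⟨crossCommutator (p, q), agree (p, q), rfl⟩
  ext w
  obtain ⟨v, hv, hvw⟩ := le_eqLocus w.2
  exact Subtype.ext hvw ▸ hv

/-- The homomorphism to the wreath product which embeds `G₁` through the complement `G₁ × G₂` and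
`G₂` through its conjugate by a function on `G₁ × G₂`. That function is `c` precomposed with
inversion, so that `wreathEval_crossCommutator` involves `c (p, q)` and not `c (p⁻¹, q⁻¹)`. -/
def toWreath (c : G₁ × G₂ → H) : G₁ ∗ G₂ →* H ≀ᵣ (G₁ × G₂) :=
  Coprod.lift (RegularWreathProduct.inl.comp (.inl G₁ G₂))
    ((MulAut.conj (⟨fun x ↦ c x⁻¹, 1⟩ : H ≀ᵣ (G₁ × G₂))⁻¹).toMonoidHom.comp
      (RegularWreathProduct.inl.comp (.inr G₁ G₂)))

theorem toWreath_right (c : G₁ × G₂ → H) (w : G₁ ∗ G₂) :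
    (toWreath c w).right = Coprod.toProd w := by
  have : RegularWreathProduct.rightHom.comp (toWreath c) = Coprod.toProd := by
    ext <;> simp [toWreath]
  exact DFunLike.congr_fun this w

/-- The homomorphism on the cartesian subgroup which evaluates at `1` the base component of
`toWreath c`. It prescribes values on the cross commutators. -/
def wreathEval (c : G₁ × G₂ → H) : cartesianSubgroup G₁ G₂ →* H where
  toFun w := (toWreath c w).left 1
  map_one' := by simp
  map_mul' v w := by
    have hv : (toWreath c v).right = 1 := (toWreath_right c v).trans v.2
    simp [hv]

theorem wreathEval_crossCommutator (c : G₁ × G₂ → H) (x : G₁ × G₂) :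
    wreathEval c (crossCommutator x) = (c (x.1, 1))⁻¹ * c x * (c (1, x.2))⁻¹ * c (1, 1) := by
  simp [wreathEval, crossCommutator, toWreath, commutatorElement_def, mul_assoc]

theorem existsUnique_hom_crossCommutator (f : {x : G₁ × G₂ // x.1 ≠ 1 ∧ x.2 ≠ 1} → H) :
    ∃! F : cartesianSubgroup G₁ G₂ →* H, ∀ x, F (crossCommutator x.1) = f x := by
  let c : G₁ × G₂ → H := Function.extend Subtype.val f 1
  have c_coe (x : {x : G₁ × G₂ // x.1 ≠ 1 ∧ x.2 ≠ 1}) : c x = f x :=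
    Subtype.val_injective.extend_apply f 1 x
  have c_eq_one {x : G₁ × G₂} (hx : x.1 = 1 ∨ x.2 = 1) : c x = 1 :=
    Function.extend_apply' _ _ x fun ⟨y, hy⟩ ↦ not_or.mpr (hy ▸ y.2) hx
  have wreathEval_apply (x : {x : G₁ × G₂ // x.1 ≠ 1 ∧ x.2 ≠ 1}) :
      wreathEval c (crossCommutator x.1) = f x := by
    simp [wreathEval_crossCommutator, c_coe, c_eq_one]
  exact ⟨wreathEval c, wreathEval_apply, fun F hF ↦
    hom_ext fun x hx ↦ (hF ⟨x, hx⟩).trans (wreathEval_apply ⟨x, hx⟩).symm⟩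

end cartesianSubgroup

/-- The kernel of the canonical surjective homomorphism `G₁ ∗ G₂ →* G₁ × G₂`
from the free product to the direct product (which restricts to the canonical
inclusions on the two free factors) is a free group. -/
theorem ker_coprod_toProd_isFreeGroup
    (G₁ G₂ : Type*) [Group G₁] [Group G₂] :
    IsFreeGroup ↥(MonoidHom.ker (Coprod.toProd : G₁ ∗ G₂ →* G₁ × G₂)) :=
  IsFreeGroup.ofUniqueLift {x : G₁ × G₂ // x.1 ≠ 1 ∧ x.2 ≠ 1}
    (fun x ↦ cartesianSubgroup.crossCommutator x.1)
    cartesianSubgroup.existsUnique_hom_crossCommutator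
end

section
/- Let G₁ and G₂ be groups, let π : G₁ ∗ G₂ → G₁ × G₂ be the canonical surjective homomorphism from the free product to the direct product, and let C be an infinite cyclic subgroup of G₁ × G₂, i.e. C is generated by an element of infinite order. Then the preimage π⁻¹(C), as a subgroup of G₁ ∗ G₂, is a free group. -/
open Monoid
open scoped Monoid.Coprod

/-!
This is the covering-space proof of the Kurosh subgroup theorem, in the language of groupoids. A
subgroup `H` of `G = G₁ ∗ G₂` is a vertex group of the action groupoid of `G` on `G ⧸ H`, and by
Nielsen–Schreier the vertex groups of a connected free groupoid are free. Functors from an action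
groupoid to a group are cocycles of the action, so this groupoid is free as soon as cocycles can be
prescribed arbitrarily and uniquely on some family of arrows.

A cocycle of `G₁ ∗ G₂` is a pair of cocycles of `G₁` and `G₂`, a cocycle of `Gᵢ` is a family of
cocycles on its orbits, and a cocycle on an orbit amounts to its values on a star of arrows joining
a base point to the other points, together with a homomorphism out of the stabilizer of the base
point. Hence `H` is free once all the stabilizers in `G₁` and `G₂` of the points of `G ⧸ H` are
free. If `H` is the preimage of `C`, these stabilizers are conjugate to the intersections of `C`
with the two factors of `G₁ × G₂`, and subgroups of the free group `C` are free.
-/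

open CategoryTheory Function MulAction

universe a u v w i j

/-- A cocycle of the action of `G` on `X` with values in `A`, that is, a functor to `A` from the
action groupoid: `c g x` is the value on the arrow `x ⟶ g • x` given by `g`. -/
structure ActionCocycle (G : Type u) (X : Type w) (A : Type a) [Group G] [MulAction G X]
    [Group A] where
  /-- The value of a cocycle on the arrow `x ⟶ g • x` given by `g`. -/
  toFun : G → X → A
  map_mul' : ∀ g h x, toFun (g * h) x = toFun g (h • x) * toFun h x

namespace ActionCocycle

section Basic

variable {G : Type u} {X : Type w} {A : Type a} [Group G] [Group A] [MulAction G X]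

instance : FunLike (ActionCocycle G X A) G (X → A) where
  coe := toFun
  coe_injective := by
    rintro ⟨c, hc⟩ ⟨d, hd⟩ (rfl : c = d)
    rfl

@[ext]
theorem ext {c d : ActionCocycle G X A} (h : ∀ g x, c g x = d g x) : c = d :=
  DFunLike.ext c d fun g => funext (h g)

theorem map_mul (c : ActionCocycle G X A) (g h : G) (x : X) :
    c (g * h) x = c g (h • x) * c h x :=
  c.map_mul' g h x

@[simp]
theorem map_one (c : ActionCocycle G X A) (x : X) : c 1 x = 1 := by
  simpa using c.map_mul 1 1 x

/-- The pullback of a cocycle along a homomorphism `φ` and a `φ`-equivariant map `f`. -/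
def comap {K : Type v} {Y : Type i} [Group K] [MulAction K Y] (c : ActionCocycle G X A)
    (φ : K →* G) (f : Y → X) (hf : ∀ k y, f (k • y) = φ k • f y) : ActionCocycle K Y A where
  toFun k y := c (φ k) (f y)
  map_mul' k l y := by rw [_root_.map_mul, c.map_mul, hf]

/-- The composition of a cocycle with a homomorphism of coefficient groups. -/
def map {B : Type i} [Group B] (c : ActionCocycle G X A) (φ : A →* B) : ActionCocycle G X B where
  toFun g x := φ (c g x)
  map_mul' g h x := by rw [c.map_mul, _root_.map_mul]

/-- The cocycle cohomologous to `c` through `τ`, i.e. the functor conjugated by `τ`. -/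
def gauge (c : ActionCocycle G X A) (τ : X → A) : ActionCocycle G X A where
  toFun g x := τ (g • x) * c g x * (τ x)⁻¹
  map_mul' g h x := by
    rw [c.map_mul, mul_smul]
    group

/-- The homomorphism which a cocycle induces on the vertex group at `b`. -/
def stabilizerHom (c : ActionCocycle G X A) (b : X) : stabilizer G b →* A where
  toFun g := c g b
  map_one' := c.map_one b
  map_mul' g h := by rw [Subgroup.coe_mul, c.map_mul, mem_stabilizer_iff.mp h.2]

end Basic

section SemidirectProduct

variable {G : Type u} {K : Type v} {X : Type w} {A : Type a} [Group G] [Group K] [Group A]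
  [MulAction G X] [MulAction K X]

/-- A cocycle of `K`, as a lift of `φ : K →* G` to the semidirect product `(X → A) ⋊ G`. -/
def toSemidirectProduct (c : ActionCocycle K X A) (φ : K →* G)
    (hφ : ∀ (k : K) (x : X), k • x = φ k • x) : K →* (X → A) ⋊[mulAutArrow] G where
  toFun k := ⟨fun x => c k (k⁻¹ • x), φ k⟩
  map_one' := by
    ext x
    · simp
    · simp
  map_mul' k l := by
    ext x
    · have h_inv : (φ k)⁻¹ • x = k⁻¹ • x := by rw [← map_inv, hφ]
      change c (k * l) ((k * l)⁻¹ • x) = c k (k⁻¹ • x) * c l (l⁻¹ • (φ k)⁻¹ • x)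
      rw [c.map_mul, h_inv, mul_inv_rev, mul_smul, smul_inv_smul]
    · exact _root_.map_mul φ k l

/-- The cocycle given by a section of the semidirect product `(X → A) ⋊ G` over `G`. -/
def ofSemidirectProduct (F : G →* (X → A) ⋊[mulAutArrow] G) (hF : ∀ g, (F g).right = g) :
    ActionCocycle G X A where
  toFun g x := (F g).left (g • x)
  map_mul' g h x := by
    rw [_root_.map_mul, SemidirectProduct.mul_left, hF, mul_smul]
    change (F g).left (g • h • x) * (F h).left (g⁻¹ • g • h • x) = _
    rw [inv_smul_smul]

/-- Cocycles are functors from the action groupoid to the coefficient group. -/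
def functorEquiv : ActionCocycle G X A ≃ (ActionCategory G X ⥤ SingleObj A) where
  toFun c := ActionCategory.uncurry (c.toSemidirectProduct (.id G) fun _ _ => rfl) fun _ => rfl
  invFun F := ofSemidirectProduct (ActionCategory.curry F) fun _ => rfl
  left_inv c := by
    ext g x
    change c g (g⁻¹ • g • x) = c g x
    rw [inv_smul_smul]
  right_inv F := by
    refine Functor.hext (fun _ => Unit.ext _ _) ?_
    refine ActionCategory.cases fun x g => heq_of_eq ?_
    change F.map (ActionCategory.homOfPair (g • g⁻¹ • x) g) = F.map (ActionCategory.homOfPair x g)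
    rw [smul_inv_smul]

theorem functorEquiv_symm_apply (F : ActionCategory G X ⥤ SingleObj A) (g : G) (x : X) :
    functorEquiv.symm F g x =
      F.map (X := (x : ActionCategory G X)) (Y := ((g • x : X) : ActionCategory G X)) ⟨g, rfl⟩ := by
  obtain ⟨c, rfl⟩ := functorEquiv.surjective F
  rw [Equiv.symm_apply_apply]
  change c g x = c g (g⁻¹ • g • x)
  rw [inv_smul_smul]

end SemidirectProduct

section Coprod

variable {G₁ : Type u} {G₂ : Type v} {X : Type w} {A : Type a} [Group G₁] [Group G₂] [Group A]
  [MulAction (G₁ ∗ G₂) X]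

theorem ext_coprod {c d : ActionCocycle (G₁ ∗ G₂) X A}
    (h₁ : ∀ k x, c (Coprod.inl k) x = d (Coprod.inl k) x)
    (h₂ : ∀ k x, c (Coprod.inr k) x = d (Coprod.inr k) x) : c = d := by
  ext g x
  induction g using Coprod.induction_on generalizing x with
  | inl k => exact h₁ k x
  | inr k => exact h₂ k x
  | mul g h hg hh => rw [c.map_mul, d.map_mul, hg, hh]

theorem bijective_comap_inl_comap_inr [MulAction G₁ X] [MulAction G₂ X]
    (hl : ∀ (k : G₁) (x : X), k • x = (Coprod.inl k : G₁ ∗ G₂) • x)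
    (hr : ∀ (k : G₂) (x : X), k • x = (Coprod.inr k : G₁ ∗ G₂) • x) :
    Bijective fun c : ActionCocycle (G₁ ∗ G₂) X A =>
      (c.comap Coprod.inl id hl, c.comap Coprod.inr id hr) := by
  constructor
  · intro c d hcd
    obtain ⟨h₁, h₂⟩ := Prod.ext_iff.mp hcd
    exact ext_coprod (fun k x => congr($h₁ k x)) (fun k x => congr($h₂ k x))
  · rintro ⟨c₁, c₂⟩
    let F : G₁ ∗ G₂ →* (X → A) ⋊[mulAutArrow] (G₁ ∗ G₂) :=
      Coprod.lift (c₁.toSemidirectProduct Coprod.inl hl) (c₂.toSemidirectProduct Coprod.inr hr)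
    have hF : SemidirectProduct.rightHom.comp F = .id (G₁ ∗ G₂) :=
      Coprod.hom_ext rfl rfl
    refine ⟨ofSemidirectProduct F fun g => congr($hF g), Prod.ext ?_ ?_⟩
    · ext k x
      change c₁ k (k⁻¹ • (Coprod.inl k : G₁ ∗ G₂) • x) = c₁ k x
      rw [← hl, inv_smul_smul]
    · ext k x
      change c₂ k (k⁻¹ • (Coprod.inr k : G₁ ∗ G₂) • x) = c₂ k x
      rw [← hr, inv_smul_smul]

end Coprod

section Orbits

variable {G : Type u} {X : Type w} {A : Type a} [Group G] [Group A] [MulAction G X]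

theorem bijective_comap_orbit :
    Bijective fun (c : ActionCocycle G X A) (ω : orbitRel.Quotient G X) =>
      c.comap (.id G) ((↑) : ω.orbit → X) fun _ _ => rfl := by
  constructor
  · intro c d hcd
    ext g x
    exact congr($hcd (Quotient.mk'' x) g ⟨x, mem_orbit_self x⟩)
  · intro c
    let val (g : G) (x : X) : A := c (Quotient.mk'' x) g ⟨x, mem_orbit_self x⟩
    have val_eq (g : G) (ω : orbitRel.Quotient G X) (x : ω.orbit) : val g x = c ω g x := by
      obtain ⟨x, hx⟩ := x
      obtain rfl := orbitRel.Quotient.mem_orbit.mp hx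
      rfl
    refine ⟨⟨val, fun g h x => ?_⟩, ?_⟩
    · let ω : orbitRel.Quotient G X := Quotient.mk'' x
      let y : ω.orbit := ⟨x, mem_orbit_self x⟩
      calc val (g * h) x = c ω g (h • y) * c ω h y := (c ω).map_mul g h y
        _ = val g (h • x) * val h x := by rw [← val_eq g ω (h • y)]; rfl
    · funext ω
      ext g x
      exact val_eq g ω x

end Orbits

section Transitive

variable {G : Type u} {X : Type w} {A : Type a} [Group G] [Group A] [MulAction G X] {b : X}

/-- The cocycle with values in the vertex group at `b` which turns an arrow `x ⟶ g • x` into a loop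
by running along `t x` before it, and backwards along `t (g • x)` after it. -/
def loop (t : X → G) (ht : ∀ x, t x • b = x) : ActionCocycle G X (stabilizer G b) where
  toFun g x := ⟨(t (g • x))⁻¹ * g * t x, by
    rw [mem_stabilizer_iff, mul_smul, mul_smul, ht, inv_smul_eq_iff, ht]⟩
  map_mul' g h x := by
    ext
    simp only [Subgroup.coe_mul, mul_smul]
    group

theorem coe_loop (t : X → G) (ht : ∀ x, t x • b = x) (g : G) (x : X) :
    (loop t ht g x : G) = (t (g • x))⁻¹ * g * t x :=
  rfl

theorem gauge_map_loop_stabilizerHom (c : ActionCocycle G X A) (t : X → G)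
    (ht : ∀ x, t x • b = x) :
    ((loop t ht).map (c.stabilizerHom b)).gauge (fun x => c (t x) b) = c := by
  ext g x
  have h_loop : t (g • x) * ((t (g • x))⁻¹ * g * t x) = g * t x := by group
  have h_mem : ((t (g • x))⁻¹ * g * t x) • b = b := mem_stabilizer_iff.mp (loop t ht g x).2
  calc c (t (g • x)) b * c ((t (g • x))⁻¹ * g * t x) b * (c (t x) b)⁻¹
    _ = c (t (g • x) * ((t (g • x))⁻¹ * g * t x)) b * (c (t x) b)⁻¹ := by
      rw [c.map_mul (t (g • x)), h_mem]
    _ = c g x := by rw [h_loop, c.map_mul, ht, mul_inv_cancel_right]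

theorem bijective_star_stabilizerHom (t : X → G) (ht : ∀ x, t x • b = x) (htb : t b = 1) :
    Bijective fun c : ActionCocycle G X A =>
      ((fun x : {x // x ≠ b} => c (t x) b), c.stabilizerHom b) := by
  classical
  constructor
  · intro c d hcd
    obtain ⟨h_star, h_stab⟩ := Prod.ext_iff.mp hcd
    have h_tree : (fun x => c (t x) b) = fun x => d (t x) b := by
      funext x
      by_cases hx : x = b
      · rw [hx, htb, c.map_one, d.map_one]
      · exact congr($h_star ⟨x, hx⟩)
    have h_stab : c.stabilizerHom b = d.stabilizerHom b := h_stab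
    rw [← c.gauge_map_loop_stabilizerHom t ht, h_tree, h_stab, d.gauge_map_loop_stabilizerHom]
  · rintro ⟨f, φ⟩
    let τ (x : X) : A := if hx : x = b then 1 else f ⟨x, hx⟩
    have hτb : τ b = 1 := dif_pos rfl
    refine ⟨((loop t ht).map φ).gauge τ, Prod.ext (funext fun x => ?_) (MonoidHom.ext fun k => ?_)⟩
    · have h_loop : loop t ht (t x) b = 1 := by
        ext
        rw [coe_loop, ht, htb, mul_one, inv_mul_cancel, Subgroup.coe_one]
      change τ (t x • b) * φ (loop t ht (t x) b) * (τ b)⁻¹ = f x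
      rw [ht, h_loop, hτb, _root_.map_one, mul_one, inv_one, mul_one]
      exact dif_neg x.2
    · have hk : (k : G) • b = b := mem_stabilizer_iff.mp k.2
      have h_loop : loop t ht k b = k := by
        ext
        rw [coe_loop, hk, htb, inv_one, one_mul, mul_one]
      change τ ((k : G) • b) * φ (loop t ht k b) * (τ b)⁻¹ = φ k
      rw [hk, h_loop, hτb, one_mul, inv_one, mul_one]

end Transitive

end ActionCocycle

open ActionCocycle

/-- A family of arrows `e i = (g, x)`, standing for `x ⟶ g • x`, is a basis of the action groupoid
if every labelling of the family by a group in the universe `a` extends uniquely to a cocycle. -/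
def IsCocycleBasis {G : Type u} {X : Type w} [Group G] [MulAction G X] {ι : Type i}
    (e : ι → G × X) : Prop :=
  ∀ (A : Type a) [Group A], Bijective fun (c : ActionCocycle G X A) n => c (e n).1 (e n).2

namespace IsCocycleBasis

theorem coprod {G₁ : Type u} {G₂ : Type v} {X : Type w} [Group G₁] [Group G₂]
    [MulAction G₁ X] [MulAction G₂ X] [MulAction (G₁ ∗ G₂) X]
    (hl : ∀ (k : G₁) (x : X), k • x = (Coprod.inl k : G₁ ∗ G₂) • x)
    (hr : ∀ (k : G₂) (x : X), k • x = (Coprod.inr k : G₁ ∗ G₂) • x)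
    {ι : Type i} {κ : Type j} {e₁ : ι → G₁ × X} {e₂ : κ → G₂ × X}
    (h₁ : IsCocycleBasis.{a} e₁) (h₂ : IsCocycleBasis.{a} e₂) :
    IsCocycleBasis.{a} (Sum.elim (fun n => ((Coprod.inl (e₁ n).1 : G₁ ∗ G₂), (e₁ n).2))
      (fun n => (Coprod.inr (e₂ n).1, (e₂ n).2))) := by
  intro A _
  convert (Equiv.sumArrowEquivProdArrow ι κ A).symm.bijective.comp
    (((h₁ A).prodMap (h₂ A)).comp (bijective_comap_inl_comap_inr hl hr)) using 1
  ext c (n | n) <;> rfl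

theorem sigma_orbit {G : Type u} {X : Type w} [Group G] [MulAction G X]
    {ι : orbitRel.Quotient G X → Type i} {e : ∀ ω, ι ω → G × ω.orbit}
    (h : ∀ ω, IsCocycleBasis.{a} (e ω)) :
    IsCocycleBasis.{a} fun p : Σ ω, ι ω => ((e p.1 p.2).1, ((e p.1 p.2).2 : X)) := by
  intro A _
  exact (Equiv.piCurry fun ω (_ : ι ω) => A).symm.bijective.comp
    ((Bijective.piMap fun ω => h ω A).comp bijective_comap_orbit)

theorem star_stabilizer {G : Type u} {X : Type w} [Group G] [MulAction G X] {b : X} {t : X → G}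
    (ht : ∀ x, t x • b = x) (htb : t b = 1) {ι : Type i} (B : FreeGroupBasis ι (stabilizer G b)) :
    IsCocycleBasis.{a} (Sum.elim (fun x : {x // x ≠ b} => (t x, b))
      (fun n => ((B n : G), b))) := by
  intro A _
  convert (Equiv.sumArrowEquivProdArrow _ ι A).symm.bijective.comp
    ((bijective_id.prodMap B.lift.symm.bijective).comp (bijective_star_stabilizerHom t ht htb))
    using 1
  ext c (n | n) <;> rfl

theorem exists_of_isPretransitive (G : Type u) {X : Type w} [Group G] [MulAction G X]
    [IsPretransitive G X] (b : X) [IsFreeGroup (stabilizer G b)] :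
    ∃ (ι : Type max u w) (e : ι → G × X), IsCocycleBasis.{a} e := by
  classical
  choose t ht using fun x => exists_smul_eq G b x
  have ht' (x : X) : update t b 1 x • b = x := by
    by_cases hx : x = b
    · simp [hx]
    · simp [hx, ht]
  exact ⟨_, _, star_stabilizer ht' (update_self b 1 t) (IsFreeGroup.basis (stabilizer G b))⟩

theorem exists_of_isFreeGroup_stabilizer (G : Type u) (X : Type w) [Group G] [MulAction G X]
    (h : ∀ x : X, IsFreeGroup (stabilizer G x)) :
    ∃ (ι : Type max u w) (e : ι → G × X), IsCocycleBasis.{a} e := by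
  have h_orbit (ω : orbitRel.Quotient G X) :
      ∃ (ι : Type max u w) (e : ι → G × ω.orbit), IsCocycleBasis.{a} e := by
    obtain ⟨x, hx⟩ := ω.nonempty_orbit
    have h_stab : stabilizer G (⟨x, hx⟩ : ω.orbit) = stabilizer G x := by
      ext g
      simp [mem_stabilizer_iff, Subtype.ext_iff]
    have : IsFreeGroup (stabilizer G (⟨x, hx⟩ : ω.orbit)) := h_stab ▸ h x
    exact exists_of_isPretransitive G (⟨x, hx⟩ : ω.orbit)
  choose ι e he using h_orbit
  exact ⟨_, _, sigma_orbit he⟩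

/-- A basis makes the action groupoid free in the sense of Mathlib. -/
abbrev isFreeGroupoid {G X ι : Type u} [Group G] [MulAction G X] {e : ι → G × X}
    (he : IsCocycleBasis.{u} e) : IsFreeGroupoid (ActionCategory G X) where
  quiverGenerators := ⟨fun p q => {n : ι // (e n).2 = ActionCategory.back (M := G) (X := X) p ∧
    (e n).1 • (e n).2 = ActionCategory.back (M := G) (X := X) q}⟩
  of n := ⟨(e n.1).1, (congrArg _ n.2.1.symm).trans n.2.2⟩
  unique_lift {A} _ f := by
    refine (existsUnique_congr fun F => ?_).mp
      (((he A).comp functorEquiv.symm.bijective).existsUnique fun n =>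
        f (a := ((e n).2 : ActionCategory G X))
          (b := (((e n).1 • (e n).2 : X) : ActionCategory G X)) ⟨n, rfl, rfl⟩)
    rw [funext_iff]
    constructor
    · rintro hF ⟨⟨⟩, x : X⟩ ⟨⟨⟩, y : X⟩ ⟨n, rfl : (e n).2 = x, rfl : (e n).1 • (e n).2 = y⟩
      exact (functorEquiv_symm_apply F _ _).symm.trans (hF n)
    · exact fun hF n => (functorEquiv_symm_apply F _ _).trans (hF _ _ ⟨n, rfl, rfl⟩)

theorem isFreeGroup {G ι : Type u} [Group G] {H : Subgroup G}
    {e : ι → G × (G ⧸ H)} (he : IsCocycleBasis.{u} e) : IsFreeGroup H := by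
  let p : ActionCategory G (G ⧸ H) := ActionCategory.objEquiv G (G ⧸ H) ((1 : G) : G ⧸ H)
  let := he.isFreeGroupoid
  let : Group (End p) := End.group p
  -- `ActionCategory` and its groupoid instance carry the same category structure only up to
  -- unfolding, so instance search does not find connectedness in the application below.
  have h_conn : CategoryTheory.IsConnected (ActionCategory G (G ⧸ H)) := inferInstance
  have : IsFreeGroup (End p) :=
    @IsFreeGroupoid.endIsFreeOfConnectedFree (ActionCategory G (G ⧸ H)) _ h_conn _ p
  exact IsFreeGroup.ofMulEquiv (G := End p) (ActionCategory.endMulEquivSubgroup H)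

end IsCocycleBasis

theorem stabilizer_mk_eq_comap_conj {G : Type u} {K : Type v} [Group G] [Group K]
    {H : Subgroup G} [MulAction K (G ⧸ H)] {φ : K →* G}
    (hφ : ∀ (k : K) (x : G ⧸ H), k • x = φ k • x) (g : G) :
    stabilizer K (g : G ⧸ H) = H.comap ((MulAut.conj g⁻¹).toMonoidHom.comp φ) := by
  ext k
  rw [mem_stabilizer_iff, hφ, MulAction.Quotient.smul_coe, smul_eq_mul, eq_comm, QuotientGroup.eq]
  simp [mul_assoc]

theorem isFreeGroup_of_forall_comap_conj_inl_inr {G₁ : Type u} {G₂ : Type v} [Group G₁] [Group G₂]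
    (H : Subgroup (G₁ ∗ G₂))
    (h₁ : ∀ g : G₁ ∗ G₂, IsFreeGroup (H.comap ((MulAut.conj g).toMonoidHom.comp Coprod.inl)))
    (h₂ : ∀ g : G₁ ∗ G₂, IsFreeGroup (H.comap ((MulAut.conj g).toMonoidHom.comp Coprod.inr))) :
    IsFreeGroup H := by
  let : MulAction G₁ ((G₁ ∗ G₂) ⧸ H) := .compHom _ (Coprod.inl : G₁ →* G₁ ∗ G₂)
  let : MulAction G₂ ((G₁ ∗ G₂) ⧸ H) := .compHom _ (Coprod.inr : G₂ →* G₁ ∗ G₂)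
  have hl (k : G₁) (x : (G₁ ∗ G₂) ⧸ H) : k • x = (Coprod.inl k : G₁ ∗ G₂) • x := rfl
  have hr (k : G₂) (x : (G₁ ∗ G₂) ⧸ H) : k • x = (Coprod.inr k : G₁ ∗ G₂) • x := rfl
  have h_stab₁ (x : (G₁ ∗ G₂) ⧸ H) : IsFreeGroup (stabilizer G₁ x) := by
    obtain ⟨g, rfl⟩ := QuotientGroup.mk_surjective x
    exact stabilizer_mk_eq_comap_conj hl g ▸ h₁ g⁻¹
  have h_stab₂ (x : (G₁ ∗ G₂) ⧸ H) : IsFreeGroup (stabilizer G₂ x) := by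
    obtain ⟨g, rfl⟩ := QuotientGroup.mk_surjective x
    exact stabilizer_mk_eq_comap_conj hr g ▸ h₂ g⁻¹
  obtain ⟨ι, e₁, he₁⟩ := IsCocycleBasis.exists_of_isFreeGroup_stabilizer.{max u v} _ _ h_stab₁
  obtain ⟨κ, e₂, he₂⟩ := IsCocycleBasis.exists_of_isFreeGroup_stabilizer.{max u v} _ _ h_stab₂
  exact (IsCocycleBasis.coprod hl hr he₁ he₂).isFreeGroup

theorem isFreeGroup_of_isCyclic (G : Type u) [Group G] [IsCyclic G] [Infinite G] :
    IsFreeGroup G :=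
  IsFreeGroup.ofMulEquiv ((FreeGroup.mulEquivIntOfUnique (α := Unit)).trans intCyclicMulEquiv)

theorem isFreeGroup_comap_of_injective {K : Type u} {P : Type v} [Group K] [Group P]
    (C : Subgroup P) [IsFreeGroup C] {f : K →* P} (hf : Injective f) :
    IsFreeGroup (C.comap f) := by
  have h_inj : Injective (f.subgroupComap C) := fun k l h =>
    Subtype.ext (hf (congrArg Subtype.val h))
  exact IsFreeGroup.ofMulEquiv (MonoidHom.ofInjective h_inj).symm

theorem comap_infinite_cyclic_coprod_toProd_isFreeGroup_general
    {G₁ : Type u} {G₂ : Type v} [Group G₁] [Group G₂] (C : Subgroup (G₁ × G₂))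
    (h₁ : IsFreeGroup (C.comap (MonoidHom.inl G₁ G₂)))
    (h₂ : IsFreeGroup (C.comap (MonoidHom.inr G₁ G₂))) :
    IsFreeGroup (C.comap (Coprod.toProd : G₁ ∗ G₂ →* G₁ × G₂)) := by
  have toProd_conj_inl (g : G₁ ∗ G₂) :
      Coprod.toProd.comp ((MulAut.conj g).toMonoidHom.comp Coprod.inl) =
        (MonoidHom.inl G₁ G₂).comp (MulAut.conj (Coprod.toProd g).1).toMonoidHom := by
    ext k <;> simp
  have toProd_conj_inr (g : G₁ ∗ G₂) :
      Coprod.toProd.comp ((MulAut.conj g).toMonoidHom.comp Coprod.inr) =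
        (MonoidHom.inr G₁ G₂).comp (MulAut.conj (Coprod.toProd g).2).toMonoidHom := by
    ext k <;> simp
  refine isFreeGroup_of_forall_comap_conj_inl_inr _ (fun g => ?_) (fun g => ?_)
  · rw [Subgroup.comap_comap, toProd_conj_inl, ← Subgroup.comap_comap]
    exact isFreeGroup_comap_of_injective _ (MulEquiv.injective _)
  · rw [Subgroup.comap_comap, toProd_conj_inr, ← Subgroup.comap_comap]
    exact isFreeGroup_comap_of_injective _ (MulEquiv.injective _)

/-- Let `π : G₁ ∗ G₂ →* G₁ × G₂` be the canonical surjective homomorphism from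
the free product to the direct product, and let `C = ⟨x⟩` be an infinite
cyclic subgroup of `G₁ × G₂` (generated by an element `x` of infinite order).
Then the preimage `π⁻¹ C` is a free group. -/
theorem comap_infinite_cyclic_coprod_toProd_isFreeGroup
    (G₁ G₂ : Type*) [Group G₁] [Group G₂]
    (x : G₁ × G₂) (hx : ¬ IsOfFinOrder x) :
    IsFreeGroup
      ↥(Subgroup.comap (Coprod.toProd : G₁ ∗ G₂ →* G₁ × G₂)
        (Subgroup.zpowers x)) := by
  have : Infinite (Subgroup.zpowers x) := (infinite_zpowers.mpr hx).to_subtype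
  have : IsFreeGroup (Subgroup.zpowers x) := isFreeGroup_of_isCyclic _
  exact comap_infinite_cyclic_coprod_toProd_isFreeGroup_general _
    (isFreeGroup_comap_of_injective _ fun _ _ => congrArg Prod.fst)
    (isFreeGroup_comap_of_injective _ fun _ _ => congrArg Prod.snd)
end

section
/- Let G₁ and G₂ be countable groups, let π : G₁ ∗ G₂ → G₁ × G₂ be the canonical surjective homomorphism from the free product to the direct product, and let V be a virtually cyclic subgroup of G₁ × G₂ (i.e. V contains a cyclic subgroup of finite index). Then there exist a countable free group F and a finite group H such that π⁻¹(V) is isomorphic to a subgroup of the wreath product F ≀ H; that is, there is an injective group homomorphism π⁻¹(V) →* F ≀ H. -/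
open Monoid
open scoped Monoid.Coprod

theorem freeGroup_of_inr_mul_map_inl_mul_inv_eq_one_iff {Y Z : Type*} {w : FreeGroup Y}
    {b b' : Z} :
    FreeGroup.of (Sum.inr b) * FreeGroup.map Sum.inl w * (FreeGroup.of (Sum.inr b'))⁻¹ = 1 ↔
      b = b' ∧ w = 1 := by
  refine ⟨fun h => ?_, by rintro ⟨rfl, rfl⟩; simp⟩
  let killInl : FreeGroup (Y ⊕ Z) →* FreeGroup Z := FreeGroup.lift (Sum.elim 1 FreeGroup.of)
  have hkill : killInl.comp (FreeGroup.map Sum.inl) = 1 := by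
    ext y
    simp [killInl]
  have hw : killInl (FreeGroup.map Sum.inl w) = 1 := DFunLike.congr_fun hkill w
  have hb : FreeGroup.of b * (FreeGroup.of b')⁻¹ = 1 := by
    simpa only [map_mul, map_inv, map_one, hw, mul_one, killInl, FreeGroup.lift_apply_of,
      Sum.elim_inr] using congrArg killInl h
  obtain rfl : b = b' := FreeGroup.of_injective (mul_inv_eq_one.mp hb)
  refine ⟨rfl, ?_⟩
  rwa [conj_eq_one_iff, map_eq_one_iff _ (FreeGroup.map_injective Sum.inl_injective)] at h

theorem exists_neWord_prod_eq {ι : Type*} {M : ι → Type*} [∀ i, Monoid (M i)] {g : CoprodI M}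
    (hg : g ≠ 1) : ∃ (i j : ι) (w : CoprodI.NeWord M i j), w.prod = g := by
  classical
  obtain ⟨w, rfl⟩ := CoprodI.Word.equiv.symm.surjective g
  have hw : w ≠ CoprodI.Word.empty := by
    rintro rfl
    exact hg CoprodI.Word.prod_empty
  obtain ⟨i, j, w', rfl⟩ := CoprodI.NeWord.of_word w hw
  exact ⟨i, j, w', rfl⟩

theorem neWord_prod_ne_one {ι : Type*} {M : ι → Type*} [∀ i, Monoid (M i)] {i j : ι}
    (w : CoprodI.NeWord M i j) : w.prod ≠ 1 := by
  classical
  intro h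
  have hempty : w.toWord = CoprodI.Word.empty :=
    CoprodI.Word.equiv.symm.injective (h.trans CoprodI.Word.prod_empty.symm)
  exact w.toList_ne_nil (congrArg CoprodI.Word.toList hempty)

section BinaryCoprod

variable (G₁ G₂ : Type*) [Group G₁] [Group G₂]

/-- The two free factors of `G₁ ∗ G₂` as a family of subgroups indexed by `Bool`. Using subgroups
allows `G₁` and `G₂` to live in different universes. -/
def coprodFactor : Bool → Subgroup (G₁ ∗ G₂)
  | true => (Coprod.inl : G₁ →* G₁ ∗ G₂).range
  | false => (Coprod.inr : G₂ →* G₁ ∗ G₂).range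

/-- The binary free product as an indexed free product, for which normal forms are available. -/
def coprodEquivCoprodI : G₁ ∗ G₂ ≃* CoprodI fun b => coprodFactor G₁ G₂ b :=
  let ι₁ : G₁ →* coprodFactor G₁ G₂ true := (Coprod.inl : G₁ →* G₁ ∗ G₂).rangeRestrict
  let ι₂ : G₂ →* coprodFactor G₁ G₂ false := (Coprod.inr : G₂ →* G₁ ∗ G₂).rangeRestrict
  let of₁ : G₁ →* CoprodI fun b => coprodFactor G₁ G₂ b :=
    (CoprodI.of (M := fun b => coprodFactor G₁ G₂ b)).comp ι₁
  let of₂ : G₂ →* CoprodI fun b => coprodFactor G₁ G₂ b :=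
    (CoprodI.of (M := fun b => coprodFactor G₁ G₂ b)).comp ι₂
  MonoidHom.toMulEquiv
    (Coprod.lift of₁ of₂)
    (CoprodI.lift fun b => (coprodFactor G₁ G₂ b).subtype)
    (by
      apply Coprod.hom_ext <;> ext g
      · exact CoprodI.lift_of (fun b => (coprodFactor G₁ G₂ b).subtype) (ι₁ g)
      · exact CoprodI.lift_of (fun b => (coprodFactor G₁ G₂ b).subtype) (ι₂ g))
    (by
      ext b ⟨x, hx⟩
      rw [MonoidHom.comp_apply, MonoidHom.comp_apply, MonoidHom.comp_apply, CoprodI.lift_of]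
      rcases b with _ | _ <;> obtain ⟨g, rfl⟩ := hx
      · exact Coprod.lift_apply_inr of₁ of₂ g
      · exact Coprod.lift_apply_inl of₁ of₂ g)

theorem coprodEquivCoprodI_symm_of (b : Bool) (g : coprodFactor G₁ G₂ b) :
    (coprodEquivCoprodI G₁ G₂).symm (CoprodI.of g) = g :=
  CoprodI.lift_of (fun b => (coprodFactor G₁ G₂ b).subtype) g

end BinaryCoprod

/-- The unrestricted permutational wreath product `N ≀_X P`, for a group `P` acting on `X`.

A homomorphism `ψ : A →* PermWreath N X P` is the same thing as an action of `A` on `X` through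
`P` together with a cocycle `c : A → X → N`, `c (a * b) x = c a (b • x) * c b x`; the two are
related by `(ψ a).left x = c a (a⁻¹ • x)`. -/
abbrev PermWreath (N X P : Type*) [Group N] [Group P] [MulAction P X] :=
  (X → N) ⋊[mulAutArrow (G := P) (A := X) (M := N)] P

namespace PermWreath

open SemidirectProduct

section Basic

variable {N N' X P A B H : Type*} [Group N] [Group N'] [Group P] [MulAction P X] [Group A]
  [Group B] [Group H]

theorem mul_left_apply (a b : PermWreath N X P) (x : X) :
    (a * b).left x = a.left x * b.left (a.right⁻¹ • x) :=
  rfl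

theorem conj_inl_left_apply (e : X → N) (a : PermWreath N X P) (x : X) :
    (MulAut.conj (inl e) a).left x = e x * a.left x * (e (a.right⁻¹ • x))⁻¹ := by
  rw [MulAut.conj_apply, ← map_inv, mul_left_apply, mul_left_apply]
  simp

/-- Change of coefficients in a permutational wreath product, coordinate by coordinate. -/
def map (φ : N →* N') : PermWreath N X P →* PermWreath N' X P :=
  SemidirectProduct.map (φ.compLeft X) (MonoidHom.id P) fun _ => rfl

theorem map_left_apply (φ : N →* N') (a : PermWreath N X P) (x : X) :
    (map φ a).left x = φ (a.left x) :=
  rfl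

theorem map_right (φ : N →* N') (a : PermWreath N X P) : (map φ a).right = a.right :=
  rfl

theorem rightHom_comp_map (φ : N →* N') :
    rightHom.comp (map φ : PermWreath N X P →* PermWreath N' X P) = rightHom :=
  rfl

/-- Every single coordinate of a homomorphism to a permutational wreath product detects the
identity element. Unlike injectivity, this is inherited by extensions to free products. -/
def CoordFaithful (ψ : A →* PermWreath N X P) : Prop :=
  ∀ a x, (ψ a).left x = 1 → a = 1

theorem CoordFaithful.comp {ψ : A →* PermWreath N X P} (hψ : CoordFaithful ψ) {κ : B →* A}
    (hκ : Function.Injective κ) : CoordFaithful (ψ.comp κ) := fun b x hb =>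
  (map_eq_one_iff κ hκ).mp (hψ (κ b) x hb)

theorem CoordFaithful.map_comp {ψ : A →* PermWreath N X P} (hψ : CoordFaithful ψ) {φ : N →* N'}
    (hφ : Function.Injective φ) : CoordFaithful ((map φ).comp ψ) := fun a x ha =>
  hψ a x ((map_eq_one_iff φ hφ).mp ha)

/-- Restriction to the coordinates in the image of `u : H → X`, on which `A` acts by left
translations through `q : A →* H`. -/
def toWreath (ψ : A →* PermWreath N X P) (q : A →* H) (u : H → X)
    (hu : ∀ a h, u (q a * h) = (ψ a).right • u h) : A →* Wreath N H :=
  MonoidHom.mk' (fun a => ⟨(ψ a).left ∘ u, q a⟩) fun a b => by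
    refine SemidirectProduct.ext (funext fun h => ?_) (map_mul q a b)
    have hu' : u ((q a)⁻¹ * h) = (ψ a).right⁻¹ • u h := by
      rw [eq_inv_smul_iff, ← hu, mul_inv_cancel_left]
    calc (ψ (a * b)).left (u h)
        = (ψ a).left (u h) * (ψ b).left ((ψ a).right⁻¹ • u h) := by
          rw [map_mul, mul_left_apply]
      _ = (ψ a).left (u h) * (ψ b).left (u ((q a)⁻¹ * h)) := by rw [hu']

theorem CoordFaithful.toWreath_injective {ψ : A →* PermWreath N X P} (hψ : CoordFaithful ψ)
    (q : A →* H) (u : H → X) (hu : ∀ a h, u (q a * h) = (ψ a).right • u h) :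
    Function.Injective (toWreath ψ q u hu) :=
  (injective_iff_map_eq_one _).mpr fun a ha =>
    hψ a (u 1) (congrFun (congrArg SemidirectProduct.left ha) 1)

theorem CoordFaithful.exists_injective_comap_wreath {D : Subgroup P}
    {ψ : A →* PermWreath N (P ⧸ D) P} (hψ : CoordFaithful ψ) (V : Subgroup P)
    [(D.subgroupOf V).Normal] :
    ∃ ψ' : V.comap (rightHom.comp ψ) →* Wreath N (V ⧸ D.subgroupOf V), Function.Injective ψ' := by
  let u : V ⧸ D.subgroupOf V → P ⧸ D :=
    Quotient.map' V.subtype fun v w hvw => by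
      rw [QuotientGroup.leftRel_apply] at hvw ⊢
      exact hvw
  let q : V.comap (rightHom.comp ψ) →* V ⧸ D.subgroupOf V :=
    (QuotientGroup.mk' _).comp ((rightHom.comp ψ).subgroupComap V)
  have hu (a : V.comap (rightHom.comp ψ)) (h : V ⧸ D.subgroupOf V) :
      u (q a * h) = (ψ a).right • u h := by
    induction h using QuotientGroup.induction_on
    rfl
  exact ⟨_, (hψ.comp (Subgroup.subtype_injective _)).toWreath_injective q u hu⟩

end Basic

section Coset

variable {P Y : Type*} [Group P] (D : Subgroup P)

/-- The Kaloujnine–Krasner homomorphism, for the section `Quotient.out` of `P → P ⧸ D`. -/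
noncomputable def kaloujnineKrasner : P →* PermWreath D (P ⧸ D) P :=
  MonoidHom.mk'
    (fun a => ⟨fun x => ⟨x.out⁻¹ * (a * (a⁻¹ • x).out), by
      rw [← QuotientGroup.eq, QuotientGroup.out_eq', ← smul_eq_mul,
        ← MulAction.Quotient.smul_mk, QuotientGroup.out_eq', smul_inv_smul]⟩, a⟩)
    fun a b => by
      refine SemidirectProduct.ext (funext fun x => Subtype.ext ?_) rfl
      simp only [mul_left_apply, Subgroup.coe_mul, mul_inv_rev, mul_smul]
      group

theorem coe_kaloujnineKrasner_left_apply (a : P) (x : P ⧸ D) :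
    ((kaloujnineKrasner D a).left x : P) = x.out⁻¹ * (a * (a⁻¹ • x).out) :=
  rfl

/-- The Kaloujnine–Krasner homomorphism with coefficients moved to a free group by `j` and then
conjugated so that the coordinate `x` of the image of `a` remembers both `x` and `a⁻¹ • x`.
The coset `x` is labelled by the free generator `Sum.inr x.out`. -/
noncomputable def labelledKaloujnineKrasner (j : D →* FreeGroup Y) :
    P →* PermWreath (FreeGroup (Y ⊕ P)) (P ⧸ D) P :=
  (MulAut.conj (inl fun x : P ⧸ D => FreeGroup.of (Sum.inr x.out))).toMonoidHom.comp
    ((map ((FreeGroup.map Sum.inl).comp j)).comp (kaloujnineKrasner D))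

theorem labelledKaloujnineKrasner_left_apply (j : D →* FreeGroup Y) (a : P) (x : P ⧸ D) :
    (labelledKaloujnineKrasner D j a).left x = FreeGroup.of (Sum.inr x.out) *
      FreeGroup.map Sum.inl (j ((kaloujnineKrasner D a).left x)) *
        (FreeGroup.of (Sum.inr (a⁻¹ • x).out))⁻¹ :=
  conj_inl_left_apply _ _ _

theorem rightHom_comp_labelledKaloujnineKrasner (j : D →* FreeGroup Y) :
    rightHom.comp (labelledKaloujnineKrasner D j) = MonoidHom.id P := by
  ext a
  simp [labelledKaloujnineKrasner, map_right, kaloujnineKrasner]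

theorem coordFaithful_labelledKaloujnineKrasner {j : D →* FreeGroup Y}
    (hj : Function.Injective j) :
    CoordFaithful (labelledKaloujnineKrasner D j) := by
  intro a x h
  rw [labelledKaloujnineKrasner_left_apply, freeGroup_of_inr_mul_map_inl_mul_inv_eq_one_iff,
    map_eq_one_iff j hj] at h
  obtain ⟨hout, hk⟩ := h
  have hconj : x.out⁻¹ * (a * x.out) = 1 := by
    simpa [coe_kaloujnineKrasner_left_apply, ← hout] using congrArg Subtype.val hk
  simpa [inv_mul_eq_one] using hconj

end Coset

section Coprod

variable {ι X P : Type*} {M N : ι → Type*} [∀ i, Group (M i)] [∀ i, Group (N i)] [Group P]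
  [MulAction P X]

/-- The extension of a family of homomorphisms to a free product, with the free product of the
coefficient groups as coefficients. -/
def coprodILift (ψ : ∀ i, M i →* PermWreath (N i) X P) :
    CoprodI M →* PermWreath (CoprodI N) X P :=
  CoprodI.lift fun i => (map CoprodI.of).comp (ψ i)

theorem rightHom_comp_coprodILift (ψ : ∀ i, M i →* PermWreath (N i) X P) :
    rightHom.comp (coprodILift ψ) = CoprodI.lift fun i => rightHom.comp (ψ i) := by
  ext i m
  simp [coprodILift, map_right]

theorem exists_coprodILift_prod_left_eq {ψ : ∀ i, M i →* PermWreath (N i) X P}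
    (hψ : ∀ i, CoordFaithful (ψ i)) {i j : ι} (w : CoprodI.NeWord M i j) (x : X) :
    ∃ n : CoprodI.NeWord N i j, (coprodILift ψ w.prod).left x = n.prod := by
  induction w generalizing x with
  | @singleton i m hm =>
    refine ⟨.singleton ((ψ i m).left x) (mt (hψ i m x) hm), ?_⟩
    simp [coprodILift, map_left_apply]
  | append w₁ hne w₂ ih₁ ih₂ =>
    obtain ⟨n₁, h₁⟩ := ih₁ x
    obtain ⟨n₂, h₂⟩ := ih₂ ((coprodILift ψ w₁.prod).right⁻¹ • x)
    refine ⟨.append n₁ hne n₂, ?_⟩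
    rw [CoprodI.NeWord.append_prod, CoprodI.NeWord.append_prod, map_mul, mul_left_apply, h₁, h₂]

theorem coordFaithful_coprodILift {ψ : ∀ i, M i →* PermWreath (N i) X P}
    (hψ : ∀ i, CoordFaithful (ψ i)) : CoordFaithful (coprodILift ψ) := by
  intro g x hg
  by_contra hne
  obtain ⟨i, j, w, rfl⟩ := exists_neWord_prod_eq hne
  obtain ⟨n, hn⟩ := exists_coprodILift_prod_left_eq hψ w x
  exact neWord_prod_ne_one n (hn.symm.trans hg)

end Coprod

theorem exists_coordFaithful_of_coprodI {ι P Y : Type*} {M : ι → Type*} [∀ i, Group (M i)]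
    [Group P] (θ : CoprodI M →* P) (hθ : ∀ i, Function.Injective (θ.comp (CoprodI.of (i := i))))
    {D : Subgroup P} {j : D →* FreeGroup Y} (hj : Function.Injective j) :
    ∃ ψ : CoprodI M →* PermWreath (FreeGroup ((_ : ι) × (Y ⊕ P))) (P ⧸ D) P,
      rightHom.comp ψ = θ ∧ CoordFaithful ψ := by
  let e := (CoprodI.FreeGroupBasis.coprodI fun _ : ι => FreeGroupBasis.ofFreeGroup (Y ⊕ P)).repr
  let ψ (i : ι) := (labelledKaloujnineKrasner D j).comp (θ.comp (CoprodI.of (i := i)))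
  have hψ (i : ι) : CoordFaithful (ψ i) :=
    (coordFaithful_labelledKaloujnineKrasner D hj).comp (hθ i)
  refine ⟨(map e.toMonoidHom).comp (coprodILift ψ), ?_,
    (coordFaithful_coprodILift hψ).map_comp e.injective⟩
  rw [← MonoidHom.comp_assoc, rightHom_comp_map, rightHom_comp_coprodILift]
  ext i m
  simp [ψ, ← MonoidHom.comp_assoc, rightHom_comp_labelledKaloujnineKrasner]

theorem exists_coordFaithful_of_coprod {G₁ G₂ P Y : Type*} [Group G₁] [Group G₂] [Group P]
    (θ : G₁ ∗ G₂ →* P) (hθ₁ : Function.Injective (θ.comp Coprod.inl))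
    (hθ₂ : Function.Injective (θ.comp Coprod.inr)) {D : Subgroup P} {j : D →* FreeGroup Y}
    (hj : Function.Injective j) :
    ∃ ψ : G₁ ∗ G₂ →* PermWreath (FreeGroup ((_ : Bool) × (Y ⊕ P))) (P ⧸ D) P,
      rightHom.comp ψ = θ ∧ CoordFaithful ψ := by
  let e := coprodEquivCoprodI G₁ G₂
  have hθ (b : Bool) :
      Function.Injective ((θ.comp e.symm.toMonoidHom).comp (CoprodI.of (i := b))) := by
    intro g g' h
    replace h : θ g = θ g' := by simpa [e, coprodEquivCoprodI_symm_of] using h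
    rcases b with _ | _ <;> obtain ⟨_, x, rfl⟩ := g <;> obtain ⟨_, x', rfl⟩ := g'
    · simp [hθ₂ h]
    · simp [hθ₁ h]
  obtain ⟨ψ, hψθ, hψ⟩ := exists_coordFaithful_of_coprodI _ hθ hj
  refine ⟨ψ.comp e.toMonoidHom, ?_, hψ.comp e.injective⟩
  rw [← MonoidHom.comp_assoc, hψθ]
  ext <;> simp

end PermWreath

theorem exists_finiteIndex_injective_freeGroup_of_isCyclic {V : Type*} [Group V] (C : Subgroup V)
    [IsCyclic C] [C.FiniteIndex] :
    ∃ (D : Subgroup V) (_ : D.FiniteIndex) (j : D →* FreeGroup Unit), Function.Injective j := by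
  rcases finite_or_infinite C with hfin | hinf
  · have : Finite V := Finite.of_equiv _ C.groupEquivQuotientProdSubgroup.symm
    exact ⟨⊥, inferInstance, 1, Function.injective_of_subsingleton _⟩
  · let e : C ≃* FreeGroup Unit :=
      intCyclicMulEquiv.symm.trans FreeGroup.mulEquivIntOfUnique.symm
    exact ⟨C, inferInstance, e.toMonoidHom, e.injective⟩

universe u

theorem comap_virtually_cyclic_embeds_wreath_general
    {G₁ G₂ Y : Type*} {P : Type u} [Group G₁] [Group G₂] [Group P] (θ : G₁ ∗ G₂ →* P)
    (hθ₁ : Function.Injective (θ.comp Coprod.inl)) (hθ₂ : Function.Injective (θ.comp Coprod.inr))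
    (V : Subgroup P) (C : Subgroup V) [C.FiniteIndex] (j : C →* FreeGroup Y)
    (hj : Function.Injective j) :
    ∃ (H : Type u) (_ : Group H) (_ : Finite H)
      (ψ : V.comap θ →* Wreath (FreeGroup ((_ : Bool) × (Y ⊕ P))) H), Function.Injective ψ := by
  let D : Subgroup P := C.normalCore.map V.subtype
  have hD : D.subgroupOf V = C.normalCore :=
    Subgroup.comap_map_eq_self_of_injective V.subtype_injective _
  have : (D.subgroupOf V).Normal := hD ▸ inferInstance
  have : (D.subgroupOf V).FiniteIndex := hD ▸ inferInstance
  let e : D ≃* C.normalCore :=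
    (C.normalCore.equivMapOfInjective V.subtype V.subtype_injective).symm
  let jD : D →* FreeGroup Y :=
    (j.comp (Subgroup.inclusion C.normalCore_le)).comp e.toMonoidHom
  have hjD : Function.Injective jD :=
    (hj.comp (Subgroup.inclusion_injective _)).comp e.injective
  obtain ⟨ψ, rfl, hψ⟩ := PermWreath.exists_coordFaithful_of_coprod θ hθ₁ hθ₂ hjD
  exact ⟨V ⧸ D.subgroupOf V, inferInstance, inferInstance, hψ.exists_injective_comap_wreath V⟩

/-- Let `G₁`, `G₂` be countable groups, `π : G₁ ∗ G₂ →* G₁ × G₂` the canonical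
surjective homomorphism from the free product to the direct product, and `V` a
virtually cyclic subgroup of `G₁ × G₂` (i.e. `V` has a cyclic subgroup `C` of
finite index).  Then there are a countable free group `F` (i.e. a free group
`FreeGroup S` on a countable set `S`) and a finite group `H` such that
`π⁻¹ V` embeds into the wreath product `F ≀ H`. -/
theorem comap_virtually_cyclic_embeds_wreath
    {G₁ G₂ : Type} [Group G₁] [Group G₂] [Countable G₁] [Countable G₂]
    (V : Subgroup (G₁ × G₂)) (C : Subgroup ↥V) (hC : IsCyclic ↥C)
    (hCidx : C.FiniteIndex) :
    ∃ (S : Type) (_ : Countable S) (H : Type) (iH : Group H) (_ : Finite H)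
      (ψ : ↥(Subgroup.comap (Coprod.toProd : G₁ ∗ G₂ →* G₁ × G₂) V) →*
        @Wreath (FreeGroup S) H _ iH),
      Function.Injective ψ := by
  obtain ⟨D, _, j, hj⟩ := exists_finiteIndex_injective_freeGroup_of_isCyclic C
  exact ⟨_, inferInstance, comap_virtually_cyclic_embeds_wreath_general Coprod.toProd
    (Prod.mk_left_injective 1) (Prod.mk_right_injective 1) V D j hj⟩
end

section
/- Let F be a free group and let S be a subgroup of the direct product ℤ × F. If S is not a free group, then the center of S is nontrivial, i.e. there exists x ∈ S with x ≠ 1 such that x commutes with every element of S. -/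
section CentralKernel

variable {G F : Type*} [Group G] [Group F] [IsFreeGroup F]

theorem isFreeGroup_of_injective (f : G →* F) (hf : Function.Injective f) : IsFreeGroup G :=
  -- The range is free by the Nielsen–Schreier theorem, an instance in Mathlib.
  IsFreeGroup.ofMulEquiv (MonoidHom.ofInjective hf).symm

theorem center_ne_bot_of_ker_le_center (f : G →* F) (hker : f.ker ≤ Subgroup.center G)
    (hG : ¬ IsFreeGroup G) : Subgroup.center G ≠ ⊥ := fun hcenter =>
  have hf : Function.Injective f := f.ker_eq_bot_iff.mp (le_bot_iff.mp (hcenter ▸ hker))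
  hG (isFreeGroup_of_injective f hf)

end CentralKernel

theorem center_subgroupOf_le_center {G : Type*} [Group G] (H : Subgroup G) :
    (Subgroup.center G).subgroupOf H ≤ Subgroup.center H := fun _ hx =>
  Subgroup.mem_center_iff.mpr fun y => Subtype.ext (Subgroup.mem_center_iff.mp hx y)

theorem ker_snd_le_center (A G : Type*) [CommGroup A] [Group G] :
    (MonoidHom.snd A G).ker ≤ Subgroup.center (A × G) := by
  rw [MonoidHom.ker_snd, Subgroup.center_prod, CommGroup.center_eq_top]
  exact Subgroup.prod_mono_right ⊤ bot_le

theorem nonfree_subgroup_of_int_prod_free_has_center_general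
    {A F : Type*} [CommGroup A] [Group F] [IsFreeGroup F]
    (S : Subgroup (A × F)) (hS : ¬ IsFreeGroup S) :
    ∃ x : S, x ≠ 1 ∧ ∀ y : S, x * y = y * x := by
  let projection : S →* F := (MonoidHom.snd A F).domRestrict S
  have hker : projection.ker ≤ Subgroup.center S :=
    calc projection.ker
      _ = (MonoidHom.snd A F).ker.subgroupOf S := MonoidHom.ker_domRestrict S _
      _ ≤ (Subgroup.center (A × F)).subgroupOf S := Subgroup.comap_mono (ker_snd_le_center A F)
      _ ≤ Subgroup.center S := center_subgroupOf_le_center S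
  obtain ⟨x, hx_center, hx_ne⟩ := (Subgroup.center S).bot_or_exists_ne_one.resolve_left
    (center_ne_bot_of_ker_le_center projection hker hS)
  exact ⟨x, hx_ne, fun y => (Subgroup.mem_center_iff.mp hx_center y).symm⟩

/-- Let `F` be a free group and `S` a subgroup of the direct product `ℤ × F`
(with `ℤ` written multiplicatively).  If `S` is not a free group, then the
center of `S` is nontrivial: there is `x ∈ S`, `x ≠ 1`, commuting with every
element of `S`. -/
theorem nonfree_subgroup_of_int_prod_free_has_center
    {F : Type*} [Group F] (hF : IsFreeGroup F)
    (S : Subgroup (Multiplicative ℤ × F)) (hS : ¬ IsFreeGroup ↥S) :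
    ∃ x : ↥S, x ≠ 1 ∧ ∀ y : ↥S, x * y = y * x :=
  nonfree_subgroup_of_int_prod_free_has_center_general S hS
end

section
/- Let X be a metric space and G a group acting on X by isometries such that the action is free and properly discontinuous in the strong sense that every point of X has an open neighborhood U with U ∩ gU = ∅ for all g ∈ G, g ≠ 1. Let H be a finite group and define an action of the wreath product G ≀ H on the product space X^H (functions H → X) by ((f, a) • m)(h) = f(h) • m(a⁻¹ · h) for (f, a) ∈ G ≀ H and m : H → X. Then this is a group action, it is by isometries with respect to the sup product metric on X^H, and it is properly discontinuous in the sense that for all m, n ∈ X^H there exist open neighborhoods U of m and V of n in X^H such that the set { γ ∈ G ≀ H : (γ • U) ∩ V ≠ ∅ } is finite. -/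
/-- The action of the wreath product `G ≀ H` on the product space `X^H`
(for `G` acting on `X`), given by `((f, a) • m) h = f h • m (a⁻¹ * h)`. -/
def wreathAct {X G H : Type*} [Group G] [Group H] [SMul G X]
    (γ : Wreath G H) (m : H → X) : H → X :=
  fun h => γ.left h • m (γ.right⁻¹ * h)

/-!
The separating neighborhoods make orbits locally finite: each `x` has a neighborhood `U` with
`g • x ∈ U` for only finitely many `g`. For an isometric action, two elements moving `x` close to
the same point `y` differ by an element moving `x` only slightly, so local finiteness at `x`
persists near every `y`, with a radius depending only on `x`. Proper discontinuity follows, and it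
passes to the wreath product: if `(f, a)` moves a small neighborhood of `m` to meet a small
neighborhood of `n`, then each `f h` lies in one of the finitely many finite sets attached to the
pairs `(m i, n h)`, while `a` ranges over the finite group `H`.
-/

open Set Topology

/-- Proper discontinuity in the two-point sense: any two points have neighborhoods such that only
finitely many transformations move the first to meet the second. The transformations are given as a
family of maps, so that the notion applies both to scalar actions and to `wreathAct`. -/
def IsProperlyDiscontinuous {Γ Y : Type*} [TopologicalSpace Y] (act : Γ → Y → Y) : Prop :=
  ∀ x y : Y, ∃ U V : Set Y, IsOpen U ∧ x ∈ U ∧ IsOpen V ∧ y ∈ V ∧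
    {γ | (act γ '' U ∩ V).Nonempty}.Finite

lemma exists_mem_nhds_finite_smul_mem {X G : Type*} [TopologicalSpace X] [One G] [SMul G X] {x : X}
    (hx : ∃ U : Set X, IsOpen U ∧ x ∈ U ∧
      ∀ g : G, g ≠ 1 → U ∩ (fun y : X => g • y) '' U = ∅) :
    ∃ U ∈ 𝓝 x, {g : G | g • x ∈ U}.Finite := by
  obtain ⟨U, hU, hxU, hdisj⟩ := hx
  refine ⟨U, hU.mem_nhds hxU, (finite_singleton 1).subset fun g hg => of_not_not fun hne => ?_⟩
  exact (hdisj g hne).le ⟨hg, mem_image_of_mem _ hxU⟩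

section IsometricAction

variable {X G : Type*} [PseudoEMetricSpace X] [Group G] [MulAction G X] [IsIsometricSMul G X]

lemma exists_forall_finite_smul_mem_eball {x : X} (hx : ∃ U ∈ 𝓝 x, {g : G | g • x ∈ U}.Finite) :
    ∃ ε > 0, ∀ y : X, {g : G | g • x ∈ Metric.eball y ε}.Finite := by
  obtain ⟨U, hU, hfin⟩ := hx
  obtain ⟨ε, hε, hεU⟩ := EMetric.mem_nhds_iff.1 hU
  refine ⟨ε / 2, ENNReal.half_pos hε.ne', fun y => ?_⟩
  obtain hempty | ⟨g₀, hg₀⟩ := {g : G | g • x ∈ Metric.eball y (ε / 2)}.eq_empty_or_nonempty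
  · exact hempty ▸ finite_empty
  refine (hfin.preimage (mul_right_injective g₀⁻¹).injOn).subset fun g hg => hεU ?_
  calc edist ((g₀⁻¹ * g) • x) x = edist (g • x) (g₀ • x) := by
        rw [← edist_smul_left g₀, smul_smul, mul_inv_cancel_left]
    _ ≤ edist (g • x) y + edist (g₀ • x) y := edist_triangle_right _ _ _
    _ < ε / 2 + ε / 2 := ENNReal.add_lt_add hg hg₀
    _ = ε := ENNReal.add_halves ε

theorem isProperlyDiscontinuous_smul
    (hfin : ∀ x : X, ∃ U ∈ 𝓝 x, {g : G | g • x ∈ U}.Finite) :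
    IsProperlyDiscontinuous fun (g : G) (x : X) => g • x := by
  intro x y
  obtain ⟨ε, hε, hε_fin⟩ := exists_forall_finite_smul_mem_eball (hfin x)
  have hε₂ : 0 < ε / 2 := ENNReal.half_pos hε.ne'
  refine ⟨Metric.eball x (ε / 2), Metric.eball y (ε / 2), Metric.isOpen_eball,
    Metric.mem_eball_self hε₂, Metric.isOpen_eball, Metric.mem_eball_self hε₂,
    (hε_fin y).subset ?_⟩
  rintro g ⟨_, ⟨u, hu, rfl⟩, hgu⟩
  calc edist (g • x) y ≤ edist (g • x) (g • u) + edist (g • u) y := edist_triangle _ _ _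
    _ = edist u x + edist (g • u) y := by rw [edist_smul_left, edist_comm]
    _ < ε / 2 + ε / 2 := ENNReal.add_lt_add hu hgu
    _ = ε := ENNReal.add_halves ε

end IsometricAction

section Wreath

variable {X G H : Type*} [Group G] [Group H]

lemma wreathAct_one [MulAction G X] (m : H → X) : wreathAct (1 : Wreath G H) m = m := by
  ext h
  simp [wreathAct]

lemma wreathAct_mul [MulAction G X] (γ₁ γ₂ : Wreath G H) (m : H → X) :
    wreathAct (γ₁ * γ₂) m = wreathAct γ₁ (wreathAct γ₂ m) := by
  ext h
  simp [wreathAct, wreathMulAut, mul_smul, mul_assoc]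

theorem isometry_wreathAct [PseudoEMetricSpace X] [SMul G X] [IsIsometricSMul G X] [Fintype H]
    (γ : Wreath G H) : Isometry (wreathAct (X := X) γ) :=
  (Isometry.piMap (fun h x => γ.left h • x) fun h => isometry_smul X (γ.left h)).comp
    (IsometryEquiv.piCongrLeft' (Y := fun _ => X) (Equiv.mulLeft γ.right)).isometry

lemma finite_setOf_left_mem_pi [Finite H] {S : H → Set G} (hS : ∀ h, (S h).Finite) :
    {γ : Wreath G H | γ.left ∈ univ.pi S}.Finite :=
  (((Finite.pi hS).prod finite_univ).preimage
    SemidirectProduct.equivProd.injective.injOn).subset fun _ hγ => ⟨hγ, mem_univ _⟩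

theorem isProperlyDiscontinuous_wreathAct [TopologicalSpace X] [SMul G X] [Finite H]
    (hG : IsProperlyDiscontinuous fun (g : G) (x : X) => g • x) :
    IsProperlyDiscontinuous (wreathAct : Wreath G H → (H → X) → H → X) := by
  intro m n
  choose U V hU hmU hV hnV hfin using fun i h => hG (m i) (n h)
  refine ⟨univ.pi fun i => ⋂ h, U i h, univ.pi fun h => ⋂ i, V i h,
    isOpen_set_pi finite_univ fun i _ => isOpen_iInter_of_finite (hU i),
    fun i _ => mem_iInter.2 (hmU i),
    isOpen_set_pi finite_univ fun h _ => isOpen_iInter_of_finite fun i => hV i h,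
    fun h _ => mem_iInter.2 fun i => hnV i h,
    (finite_setOf_left_mem_pi fun h => finite_iUnion fun i => hfin i h).subset ?_⟩
  rintro γ ⟨_, ⟨u, hu, rfl⟩, hγu⟩ h -
  let i := γ.right⁻¹ * h
  have hui : u i ∈ U i h := mem_iInter.1 (hu i trivial) h
  have hγui : γ.left h • u i ∈ V i h := mem_iInter.1 (hγu h trivial) i
  exact mem_iUnion.2 ⟨i, γ.left h • u i, mem_image_of_mem _ hui, hγui⟩

end Wreath

theorem wreath_action_isometric_properly_discontinuous_general
    {X G : Type*} [PseudoEMetricSpace X] [Group G] [MulAction G X] [IsIsometricSMul G X]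
    (hfin : ∀ x : X, ∃ U ∈ 𝓝 x, {g : G | g • x ∈ U}.Finite)
    (H : Type*) [Group H] [Fintype H] :
    ((∀ m : H → X, wreathAct (1 : Wreath G H) m = m) ∧
        ∀ (γ₁ γ₂ : Wreath G H) (m : H → X),
          wreathAct (γ₁ * γ₂) m = wreathAct γ₁ (wreathAct γ₂ m)) ∧
      (∀ γ : Wreath G H, Isometry (wreathAct (X := X) γ)) ∧
      IsProperlyDiscontinuous (wreathAct : Wreath G H → (H → X) → H → X) :=
  ⟨⟨wreathAct_one, wreathAct_mul⟩, isometry_wreathAct,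
    isProperlyDiscontinuous_wreathAct (isProperlyDiscontinuous_smul hfin)⟩

/-- Let `G` act on a metric space `X` by isometries, freely and properly
discontinuously in the strong sense that every point has an open neighborhood
`U` with `U ∩ g • U = ∅` for all `g ≠ 1`.  Let `H` be a finite group.  Then
`((f, a) • m) h = f h • m (a⁻¹ * h)` defines a group action of the wreath
product `G ≀ H` on `X^H`, this action is by isometries for the sup product
metric on `X^H` (which is the metric of the `Pi` metric-space instance), and
it is properly discontinuous: any two points `m, n` of `X^H` have open
neighborhoods `U ∋ m`, `V ∋ n` such that only finitely many `γ ∈ G ≀ H`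
satisfy `γ • U ∩ V ≠ ∅`. -/
theorem wreath_action_isometric_properly_discontinuous
    {X G : Type*} [MetricSpace X] [Group G] [MulAction G X]
    (hiso : ∀ g : G, Isometry fun x : X => g • x)
    (hpd : ∀ x : X, ∃ U : Set X, IsOpen U ∧ x ∈ U ∧
      ∀ g : G, g ≠ 1 → U ∩ (fun y : X => g • y) '' U = ∅)
    (H : Type*) [Group H] [Fintype H] :
    ((∀ m : H → X, wreathAct (1 : Wreath G H) m = m) ∧
        ∀ (γ₁ γ₂ : Wreath G H) (m : H → X),
          wreathAct (γ₁ * γ₂) m = wreathAct γ₁ (wreathAct γ₂ m)) ∧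
      (∀ γ : Wreath G H, Isometry (wreathAct (X := X) γ)) ∧
      (∀ m n : H → X, ∃ U V : Set (H → X),
        IsOpen U ∧ m ∈ U ∧ IsOpen V ∧ n ∈ V ∧
          {γ : Wreath G H | (wreathAct γ '' U ∩ V).Nonempty}.Finite) := by
  have : IsIsometricSMul G X := ⟨hiso⟩
  exact wreath_action_isometric_properly_discontinuous_general
    (fun x => exists_mem_nhds_finite_smul_mem (hpd x)) H
end
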